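/- arXiv:math/0412395 — 3 statements merged into one kernel-verified Lean document; each statement's English description precedes it below -/
import Mathlib

section
/- Let T be a symplectic triple system over a field k of characteristic ≠ 2 and let V be a two-dimensional k-vector space with a nonzero alternating bilinear form ⟨·|·⟩. Then g(T) = (sp(V) ⊕ inder(T)) ⊕ (V ⊗ T), with the bracket described in the context, is a Lie algebra. -/
open scoped TensorProduct

/-- A symplectic triple system: a finite-dimensional vector space `T` over a field `k`
with a nonzero alternating bilinear form `B` and a trilinear product `tp` satisfying
identities (a)–(d). -/
def IsSympTripleSystem (k : Type*) {T : Type*} [Field k] [AddCommGroup T] [Module k T]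
    (tp : T →ₗ[k] T →ₗ[k] T →ₗ[k] T) (B : T →ₗ[k] T →ₗ[k] k) : Prop :=
  (∀ x : T, B x x = 0) ∧ B ≠ 0 ∧
  (∀ x y z : T, tp x y z = tp y x z) ∧
  (∀ x y z : T, tp x y z - tp x z y = B x z • y - B x y • z + (2 * B y z) • x) ∧
  (∀ x y u v w : T, tp x y (tp u v w) =
      tp (tp x y u) v w + tp u (tp x y v) w + tp u v (tp x y w)) ∧
  (∀ x y u v : T, B (tp x y u) v + B u (tp x y v) = 0)

/-- The symplectic Lie algebra `sp(V)` of a bilinear form, as a submodule of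
`End(V) = V →ₗ[k] V`. -/
def spSub (k V : Type*) [Field k] [AddCommGroup V] [Module k V]
    (Bv : V →ₗ[k] V →ₗ[k] k) : Submodule k (V →ₗ[k] V) where
  carrier := {f | ∀ u w : V, Bv (f u) w + Bv u (f w) = 0}
  add_mem' := by
    intro f g hf hg u w
    simp only [Set.mem_setOf_eq, LinearMap.add_apply, map_add] at *
    linear_combination hf u w + hg u w
  zero_mem' := by
    intro u w
    simp
  smul_mem' := by
    intro c f hf u w
    simp only [Set.mem_setOf_eq, LinearMap.smul_apply, map_smul, smul_eq_mul] at *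
    linear_combination c * hf u w

/-- `inder(T)`: the linear span of the maps `d_{x,y} = [xy·]`. -/
def inderSub (k T : Type*) [Field k] [AddCommGroup T] [Module k T]
    (tp : T →ₗ[k] T →ₗ[k] T →ₗ[k] T) : Submodule k (T →ₗ[k] T) :=
  Submodule.span k {f : T →ₗ[k] T | ∃ x y : T, f = tp x y}

/-- The map `γ_{u,v} = ⟨u|·⟩v + ⟨v|·⟩u`. -/
def gammaMap (k V : Type*) [Field k] [AddCommGroup V] [Module k V]
    (Bv : V →ₗ[k] V →ₗ[k] k) (u v : V) : V →ₗ[k] V :=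
  (Bv u).smulRight v + (Bv v).smulRight u

section SympTripleBracket

variable {k V T : Type*} [Field k] [AddCommGroup V] [Module k V] [AddCommGroup T] [Module k T]

theorem bilin_swap_of_alternating {M : Type*} [AddCommGroup M] [Module k M]
    {B : M →ₗ[k] M →ₗ[k] k} (hB : ∀ x, B x x = 0) (x y : M) : B x y = -B y x := by
  have h := hB (x + y)
  simp only [map_add, LinearMap.add_apply, hB] at h
  linear_combination h

theorem alternating_cyclic_of_finrank_two {Bv : V →ₗ[k] V →ₗ[k] k} (hB : ∀ v, Bv v v = 0)
    (hV : Module.finrank k V = 2) (u v w : V) :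
    Bv u v • w + Bv v w • u + Bv w u • v = 0 := by
  have : FiniteDimensional k V := Module.finite_of_finrank_eq_succ hV
  let b := Module.finBasisOfFinrankEq k V hV
  have hb (x : V) : x = b.repr x 0 • b 0 + b.repr x 1 • b 1 := by
    conv_lhs => rw [← b.sum_repr x, Fin.sum_univ_two]
  rw [hb u, hb v, hb w]
  simp only [map_add, map_smul, LinearMap.add_apply, LinearMap.smul_apply, smul_eq_mul, hB,
    bilin_swap_of_alternating hB (b 1) (b 0)]
  module

theorem gammaMap_apply (Bv : V →ₗ[k] V →ₗ[k] k) (u v w : V) :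
    gammaMap k V Bv u v w = Bv u w • v + Bv v w • u := rfl

theorem gammaMap_mem_spSub {Bv : V →ₗ[k] V →ₗ[k] k} (hB : ∀ v, Bv v v = 0) (u v : V) :
    gammaMap k V Bv u v ∈ spSub k V Bv := by
  intro x y
  simp only [gammaMap_apply, map_add, map_smul, LinearMap.add_apply, LinearMap.smul_apply,
    smul_eq_mul, bilin_swap_of_alternating hB x u, bilin_swap_of_alternating hB x v]
  ring

theorem commutator_mem_spSub {Bv : V →ₗ[k] V →ₗ[k] k} {s t : Module.End k V}
    (hs : s ∈ spSub k V Bv) (ht : t ∈ spSub k V Bv) : s * t - t * s ∈ spSub k V Bv := by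
  intro u w
  have h1 := hs (t u) w
  have h2 := hs u (t w)
  have h3 := ht (s u) w
  have h4 := ht u (s w)
  simp only [LinearMap.sub_apply, Module.End.mul_apply, map_sub]
  linear_combination h1 - h4 - h3 + h2

theorem commutator_gammaMap {Bv : V →ₗ[k] V →ₗ[k] k} {s : Module.End k V}
    (hs : s ∈ spSub k V Bv) (u v : V) :
    s * gammaMap k V Bv u v - gammaMap k V Bv u v * s =
      gammaMap k V Bv (s u) v + gammaMap k V Bv u (s v) := by
  ext w
  have h1 : Bv (s u) w = -Bv u (s w) := eq_neg_of_add_eq_zero_left (hs u w)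
  have h2 : Bv (s v) w = -Bv v (s w) := eq_neg_of_add_eq_zero_left (hs v w)
  simp only [LinearMap.sub_apply, LinearMap.add_apply, Module.End.mul_apply, gammaMap_apply,
    map_add, map_smul, h1, h2]
  module

variable (k V) in
/-- `gammaMap` as a bilinear map. -/
def gammaBilin (Bv : V →ₗ[k] V →ₗ[k] k) : V →ₗ[k] V →ₗ[k] Module.End k V :=
  LinearMap.mk₂ k (gammaMap k V Bv)
    (fun _ _ _ => by
      ext; simp only [gammaMap_apply, map_add, LinearMap.add_apply]; module)
    (fun _ _ _ => by
      ext; simp only [gammaMap_apply, map_smul, LinearMap.smul_apply, smul_eq_mul]; module)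
    (fun _ _ _ => by
      ext; simp only [gammaMap_apply, map_add, LinearMap.add_apply]; module)
    (fun _ _ _ => by
      ext; simp only [gammaMap_apply, map_smul, LinearMap.smul_apply, smul_eq_mul]; module)

/-- The `sp(V)`-component of the bracket on `V ⊗ T`. -/
noncomputable def spComponent (Bv : V →ₗ[k] V →ₗ[k] k) (B : T →ₗ[k] T →ₗ[k] k) :
    V ⊗[k] T →ₗ[k] V ⊗[k] T →ₗ[k] Module.End k V :=
  (TensorProduct.map₂ (gammaBilin k V Bv) B).compr₂ (TensorProduct.rid k _).toLinearMap

/-- The `inder(T)`-component of the bracket on `V ⊗ T`. -/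
noncomputable def inderComponent (Bv : V →ₗ[k] V →ₗ[k] k) (tp : T →ₗ[k] T →ₗ[k] T →ₗ[k] T) :
    V ⊗[k] T →ₗ[k] V ⊗[k] T →ₗ[k] Module.End k T :=
  (TensorProduct.map₂ Bv tp).compr₂ (TensorProduct.lid k _).toLinearMap

@[simp]
theorem spComponent_tmul (Bv : V →ₗ[k] V →ₗ[k] k) (B : T →ₗ[k] T →ₗ[k] k) (u v : V) (x y : T) :
    spComponent Bv B (u ⊗ₜ x) (v ⊗ₜ y) = B x y • gammaMap k V Bv u v := by
  simp [spComponent, gammaBilin]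

@[simp]
theorem inderComponent_tmul (Bv : V →ₗ[k] V →ₗ[k] k) (tp : T →ₗ[k] T →ₗ[k] T →ₗ[k] T)
    (u v : V) (x y : T) :
    inderComponent Bv tp (u ⊗ₜ x) (v ⊗ₜ y) = Bv u v • tp x y := by
  simp [inderComponent]

theorem bilin_tensor_induction {p : V ⊗[k] T → V ⊗[k] T → Prop}
    (zero_left : ∀ Y, p 0 Y) (zero_right : ∀ X, p X 0)
    (tmul : ∀ u x v y, p (u ⊗ₜ x) (v ⊗ₜ y))
    (add_left : ∀ X X' Y, p X Y → p X' Y → p (X + X') Y)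
    (add_right : ∀ X Y Y', p X Y → p X Y' → p X (Y + Y')) (X Y : V ⊗[k] T) : p X Y := by
  induction X with
  | zero => exact zero_left Y
  | add X X' h h' => exact add_left _ _ _ h h'
  | tmul u x =>
    induction Y with
    | zero => exact zero_right _
    | add Y Y' h h' => exact add_right _ _ _ h h'
    | tmul v y => exact tmul u x v y

section Components

variable {Bv : V →ₗ[k] V →ₗ[k] k} {B : T →ₗ[k] T →ₗ[k] k} {tp : T →ₗ[k] T →ₗ[k] T →ₗ[k] T}

theorem spComponent_mem (hB : ∀ v, Bv v v = 0) (X Y : V ⊗[k] T) :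
    spComponent Bv B X Y ∈ spSub k V Bv := by
  induction X, Y using bilin_tensor_induction with
  | zero_left => simp
  | zero_right => simp
  | tmul u x v y =>
    rw [spComponent_tmul]
    exact Submodule.smul_mem _ _ (gammaMap_mem_spSub hB u v)
  | add_left X X' Y h h' => rw [map_add, LinearMap.add_apply]; exact Submodule.add_mem _ h h'
  | add_right X Y Y' h h' => rw [map_add]; exact Submodule.add_mem _ h h'

theorem inderComponent_mem (X Y : V ⊗[k] T) : inderComponent Bv tp X Y ∈ inderSub k T tp := by
  induction X, Y using bilin_tensor_induction with
  | zero_left => simp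
  | zero_right => simp
  | tmul u x v y =>
    rw [inderComponent_tmul]
    exact Submodule.smul_mem _ _ (Submodule.subset_span ⟨x, y, rfl⟩)
  | add_left X X' Y h h' => rw [map_add, LinearMap.add_apply]; exact Submodule.add_mem _ h h'
  | add_right X Y Y' h h' => rw [map_add]; exact Submodule.add_mem _ h h'

theorem spComponent_swap (hsts : IsSympTripleSystem k tp B) (X Y : V ⊗[k] T) :
    spComponent Bv B X Y = -spComponent Bv B Y X := by
  induction X, Y using bilin_tensor_induction with
  | zero_left => simp
  | zero_right => simp
  | tmul u x v y =>
    ext w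
    simp only [spComponent_tmul, LinearMap.neg_apply, LinearMap.smul_apply, gammaMap_apply,
      bilin_swap_of_alternating hsts.1 x y]
    module
  | add_left X X' Y h h' => simp only [map_add, LinearMap.add_apply, h, h', neg_add]
  | add_right X Y Y' h h' => simp only [map_add, LinearMap.add_apply, h, h', neg_add]

theorem inderComponent_swap (hB : ∀ v, Bv v v = 0) (hsts : IsSympTripleSystem k tp B)
    (X Y : V ⊗[k] T) : inderComponent Bv tp X Y = -inderComponent Bv tp Y X := by
  induction X, Y using bilin_tensor_induction with
  | zero_left => simp
  | zero_right => simp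
  | tmul u x v y =>
    ext w
    simp only [inderComponent_tmul, LinearMap.neg_apply, LinearMap.smul_apply,
      bilin_swap_of_alternating hB u v, hsts.2.2.1 x y w]
    module
  | add_left X X' Y h h' => simp only [map_add, LinearMap.add_apply, h, h', neg_add]
  | add_right X Y Y' h h' => simp only [map_add, LinearMap.add_apply, h, h', neg_add]

theorem spComponent_self (hsts : IsSympTripleSystem k tp B) (X : V ⊗[k] T) :
    spComponent Bv B X X = 0 := by
  induction X with
  | zero => simp
  | tmul u x => simp [hsts.1 x]
  | add X Y hX hY =>
    simp only [map_add, LinearMap.add_apply, hX, hY, spComponent_swap hsts X Y]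
    abel

theorem inderComponent_self (hB : ∀ v, Bv v v = 0) (hsts : IsSympTripleSystem k tp B)
    (X : V ⊗[k] T) : inderComponent Bv tp X X = 0 := by
  induction X with
  | zero => simp
  | tmul u x => simp [hB u]
  | add X Y hX hY =>
    simp only [map_add, LinearMap.add_apply, hX, hY, inderComponent_swap hB hsts X Y]
    abel

theorem inderSub_derivation (hsts : IsSympTripleSystem k tp B) {d : Module.End k T}
    (hd : d ∈ inderSub k T tp) (u v w : T) :
    d (tp u v w) = tp (d u) v w + tp u (d v) w + tp u v (d w) := by
  induction hd using Submodule.span_induction with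
  | mem d h =>
    obtain ⟨x, y, rfl⟩ := h
    exact hsts.2.2.2.2.1 x y u v w
  | zero => simp
  | add d e _ _ h h' => simp only [LinearMap.add_apply, map_add, h, h']; abel
  | smul c d _ h => simp only [LinearMap.smul_apply, map_smul, h, smul_add]

theorem inderSub_skew (hsts : IsSympTripleSystem k tp B) {d : Module.End k T}
    (hd : d ∈ inderSub k T tp) (u v : T) : B (d u) v + B u (d v) = 0 := by
  induction hd using Submodule.span_induction with
  | mem d h =>
    obtain ⟨x, y, rfl⟩ := h
    exact hsts.2.2.2.2.2 x y u v
  | zero => simp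
  | add d e _ _ h h' =>
    simp only [LinearMap.add_apply, map_add]
    linear_combination h + h'
  | smul c d _ h =>
    simp only [LinearMap.smul_apply, map_smul, smul_eq_mul]
    linear_combination c * h

theorem commutator_tp (hsts : IsSympTripleSystem k tp B) {d : Module.End k T}
    (hd : d ∈ inderSub k T tp) (u v : T) :
    d * tp u v - tp u v * d = tp (d u) v + tp u (d v) := by
  ext w
  simp only [LinearMap.sub_apply, LinearMap.add_apply, Module.End.mul_apply,
    inderSub_derivation hsts hd u v w]
  abel

theorem commutator_mem_inderSub (hsts : IsSympTripleSystem k tp B) {d e : Module.End k T}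
    (hd : d ∈ inderSub k T tp) (he : e ∈ inderSub k T tp) :
    d * e - e * d ∈ inderSub k T tp := by
  induction he using Submodule.span_induction with
  | mem e h =>
    obtain ⟨x, y, rfl⟩ := h
    rw [commutator_tp hsts hd]
    exact Submodule.add_mem _ (Submodule.subset_span ⟨_, _, rfl⟩)
      (Submodule.subset_span ⟨_, _, rfl⟩)
  | zero => simp
  | add e f _ _ h h' =>
    convert Submodule.add_mem _ h h' using 1
    noncomm_ring
  | smul c e _ h =>
    convert Submodule.smul_mem _ c h using 1
    rw [mul_smul_comm, smul_mul_assoc, smul_sub]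

theorem commutator_spComponent {s : Module.End k V} (hs : s ∈ spSub k V Bv) (X Y : V ⊗[k] T) :
    s * spComponent Bv B X Y - spComponent Bv B X Y * s =
      spComponent Bv B (s.rTensor T X) Y + spComponent Bv B X (s.rTensor T Y) := by
  induction X, Y using bilin_tensor_induction with
  | zero_left => simp
  | zero_right => simp
  | tmul u x v y =>
    simp only [LinearMap.rTensor_tmul, spComponent_tmul, mul_smul_comm, smul_mul_assoc,
      ← smul_sub, ← smul_add, commutator_gammaMap hs]
  | add_left X X' Y h h' =>
    simp only [map_add, LinearMap.add_apply, mul_add, add_mul]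
    linear_combination (norm := module) h + h'
  | add_right X Y Y' h h' =>
    simp only [map_add, mul_add, add_mul]
    linear_combination (norm := module) h + h'

theorem commutator_inderComponent (hsts : IsSympTripleSystem k tp B) {d : Module.End k T}
    (hd : d ∈ inderSub k T tp) (X Y : V ⊗[k] T) :
    d * inderComponent Bv tp X Y - inderComponent Bv tp X Y * d =
      inderComponent Bv tp (d.lTensor V X) Y + inderComponent Bv tp X (d.lTensor V Y) := by
  induction X, Y using bilin_tensor_induction with
  | zero_left => simp
  | zero_right => simp
  | tmul u x v y =>
    simp only [LinearMap.lTensor_tmul, inderComponent_tmul, mul_smul_comm, smul_mul_assoc,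
      ← smul_sub, ← smul_add, commutator_tp hsts hd]
  | add_left X X' Y h h' =>
    simp only [map_add, LinearMap.add_apply, mul_add, add_mul]
    linear_combination (norm := module) h + h'
  | add_right X Y Y' h h' =>
    simp only [map_add, mul_add, add_mul]
    linear_combination (norm := module) h + h'

theorem inderComponent_rTensor {s : Module.End k V} (hs : s ∈ spSub k V Bv) (X Y : V ⊗[k] T) :
    inderComponent Bv tp (s.rTensor T X) Y + inderComponent Bv tp X (s.rTensor T Y) = 0 := by
  induction X, Y using bilin_tensor_induction with
  | zero_left => simp
  | zero_right => simp
  | tmul u x v y =>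
    simp only [LinearMap.rTensor_tmul, inderComponent_tmul, ← add_smul, hs u v, zero_smul]
  | add_left X X' Y h h' =>
    simp only [map_add, LinearMap.add_apply]
    rw [add_add_add_comm, h, h', add_zero]
  | add_right X Y Y' h h' =>
    simp only [map_add]
    rw [add_add_add_comm, h, h', add_zero]

theorem spComponent_lTensor (hsts : IsSympTripleSystem k tp B) {d : Module.End k T}
    (hd : d ∈ inderSub k T tp) (X Y : V ⊗[k] T) :
    spComponent Bv B (d.lTensor V X) Y + spComponent Bv B X (d.lTensor V Y) = 0 := by
  induction X, Y using bilin_tensor_induction with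
  | zero_left => simp
  | zero_right => simp
  | tmul u x v y =>
    simp only [LinearMap.lTensor_tmul, spComponent_tmul, ← add_smul, inderSub_skew hsts hd x y,
      zero_smul]
  | add_left X X' Y h h' =>
    simp only [map_add, LinearMap.add_apply]
    rw [add_add_add_comm, h, h', add_zero]
  | add_right X Y Y' h h' =>
    simp only [map_add]
    rw [add_add_add_comm, h, h', add_zero]

theorem tmul_cyclic_sum (hB : ∀ v, Bv v v = 0) (hV : Module.finrank k V = 2)
    (hsts : IsSympTripleSystem k tp B) (u v w : V) (x y z : T) :
    (B x y • gammaMap k V Bv u v w ⊗ₜ[k] z + Bv u v • w ⊗ₜ[k] tp x y z) +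
      (B y z • gammaMap k V Bv v w u ⊗ₜ[k] x + Bv v w • u ⊗ₜ[k] tp y z x) +
      (B z x • gammaMap k V Bv w u v ⊗ₜ[k] y + Bv w u • v ⊗ₜ[k] tp z x y) = 0 := by
  have hw : Bv u v • w = -(Bv v w • u) - Bv w u • v := by
    linear_combination (norm := module) alternating_cyclic_of_finrank_two hB hV u v w
  have h1 : tp y z x = tp x y z + (B y x • z - B y z • x + (2 * B z x) • y) := by
    rw [← hsts.2.2.2.1 y z x, hsts.2.2.1 x y z]; abel
  have h2 : tp z x y = tp x y z - (B x z • y - B x y • z + (2 * B y z) • x) := by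
    rw [← hsts.2.2.2.1 x y z, hsts.2.2.1 z x y]; abel
  simp only [gammaMap_apply, bilin_swap_of_alternating hB u w, bilin_swap_of_alternating hB v u,
    bilin_swap_of_alternating hB w v, neg_smul, hw, h1, h2,
    bilin_swap_of_alternating hsts.1 x z, bilin_swap_of_alternating hsts.1 y x]
  rw [TensorProduct.smul_tmul' (Bv u v), hw]
  simp only [TensorProduct.add_tmul, TensorProduct.sub_tmul, TensorProduct.neg_tmul,
    TensorProduct.tmul_add, TensorProduct.tmul_sub, TensorProduct.tmul_neg, TensorProduct.tmul_smul,
    ← TensorProduct.smul_tmul']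
  module

theorem tensor_cyclic_sum (hB : ∀ v, Bv v v = 0) (hV : Module.finrank k V = 2)
    (hsts : IsSympTripleSystem k tp B) (X Y Z : V ⊗[k] T) :
    ((spComponent Bv B X Y).rTensor T Z + (inderComponent Bv tp X Y).lTensor V Z) +
      ((spComponent Bv B Y Z).rTensor T X + (inderComponent Bv tp Y Z).lTensor V X) +
      ((spComponent Bv B Z X).rTensor T Y + (inderComponent Bv tp Z X).lTensor V Y) = 0 := by
  induction X, Y using bilin_tensor_induction with
  | zero_left => simp
  | zero_right => simp
  | tmul u x v y =>
    induction Z with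
    | zero => simp
    | tmul w z =>
      simpa only [spComponent_tmul, inderComponent_tmul, LinearMap.rTensor_smul,
        LinearMap.lTensor_smul, LinearMap.smul_apply, LinearMap.rTensor_tmul,
        LinearMap.lTensor_tmul] using tmul_cyclic_sum hB hV hsts u v w x y z
    | add Z Z' h h' =>
      simp only [map_add, LinearMap.add_apply, LinearMap.rTensor_add, LinearMap.lTensor_add]
      linear_combination (norm := module) h + h'
  | add_left X X' Y h h' =>
    simp only [map_add, LinearMap.add_apply, LinearMap.rTensor_add, LinearMap.lTensor_add]
    linear_combination (norm := module) h + h'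
  | add_right X Y Y' h h' =>
    simp only [map_add, LinearMap.add_apply, LinearMap.rTensor_add, LinearMap.lTensor_add]
    linear_combination (norm := module) h + h'

/-- The bracket of `g(T)`. -/
noncomputable def sympTripleBracket (hB : ∀ v, Bv v v = 0) (hsts : IsSympTripleSystem k tp B) :
    ((↥(spSub k V Bv) × ↥(inderSub k T tp)) × (V ⊗[k] T)) →ₗ[k]
      ((↥(spSub k V Bv) × ↥(inderSub k T tp)) × (V ⊗[k] T)) →ₗ[k]
      ((↥(spSub k V Bv) × ↥(inderSub k T tp)) × (V ⊗[k] T)) :=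
  LinearMap.mk₂ k
    (fun a b =>
      ((⟨(a.1.1 : Module.End k V) * b.1.1 - (b.1.1 : Module.End k V) * a.1.1 +
            spComponent Bv B a.2 b.2,
          Submodule.add_mem _ (commutator_mem_spSub a.1.1.2 b.1.1.2) (spComponent_mem hB _ _)⟩,
        ⟨(a.1.2 : Module.End k T) * b.1.2 - (b.1.2 : Module.End k T) * a.1.2 +
            inderComponent Bv tp a.2 b.2,
          Submodule.add_mem _ (commutator_mem_inderSub hsts a.1.2.2 b.1.2.2)
            (inderComponent_mem _ _)⟩),
        LinearMap.rTensor T (a.1.1 : Module.End k V) b.2 +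
          LinearMap.lTensor V (a.1.2 : Module.End k T) b.2 -
          LinearMap.rTensor T (b.1.1 : Module.End k V) a.2 -
          LinearMap.lTensor V (b.1.2 : Module.End k T) a.2))
    (fun a a' b => by
      ext1
      · ext1 <;> apply Subtype.ext <;>
        simp only [Prod.fst_add, Prod.snd_add, Submodule.coe_add, map_add, LinearMap.add_apply,
          add_mul, mul_add] <;> abel
      · simp only [Prod.fst_add, Prod.snd_add, Submodule.coe_add, map_add, LinearMap.add_apply,
          LinearMap.rTensor_add, LinearMap.lTensor_add]
        abel)
    (fun c a b => by
      ext1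
      · ext1 <;> apply Subtype.ext <;>
        simp only [Prod.smul_fst, Prod.smul_snd, Submodule.coe_smul, map_smul,
          LinearMap.smul_apply, mul_smul_comm, smul_mul_assoc, smul_sub, smul_add]
      · simp only [Prod.smul_fst, Prod.smul_snd, Submodule.coe_smul, map_smul,
          LinearMap.smul_apply, LinearMap.rTensor_smul, LinearMap.lTensor_smul, smul_sub,
          smul_add])
    (fun a b b' => by
      ext1
      · ext1 <;> apply Subtype.ext <;>
        simp only [Prod.fst_add, Prod.snd_add, Submodule.coe_add, map_add,
          add_mul, mul_add] <;> abel
      · simp only [Prod.fst_add, Prod.snd_add, Submodule.coe_add, map_add, LinearMap.add_apply,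
          LinearMap.rTensor_add, LinearMap.lTensor_add]
        abel)
    (fun c a b => by
      ext1
      · ext1 <;> apply Subtype.ext <;>
        simp only [Prod.smul_fst, Prod.smul_snd, Submodule.coe_smul, map_smul,
          mul_smul_comm, smul_mul_assoc, smul_sub, smul_add]
      · simp only [Prod.smul_fst, Prod.smul_snd, Submodule.coe_smul, map_smul,
          LinearMap.smul_apply, LinearMap.rTensor_smul, LinearMap.lTensor_smul, smul_sub,
          smul_add])

variable (hB : ∀ v, Bv v v = 0) (hsts : IsSympTripleSystem k tp B)
  (a b c : (↥(spSub k V Bv) × ↥(inderSub k T tp)) × (V ⊗[k] T))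

theorem sympTripleBracket_sp :
    ((sympTripleBracket hB hsts a b).1.1 : Module.End k V) =
      (a.1.1 : Module.End k V) * b.1.1 - (b.1.1 : Module.End k V) * a.1.1 +
        spComponent Bv B a.2 b.2 := rfl

theorem sympTripleBracket_inder :
    ((sympTripleBracket hB hsts a b).1.2 : Module.End k T) =
      (a.1.2 : Module.End k T) * b.1.2 - (b.1.2 : Module.End k T) * a.1.2 +
        inderComponent Bv tp a.2 b.2 := rfl

theorem sympTripleBracket_tensor :
    (sympTripleBracket hB hsts a b).2 =
      LinearMap.rTensor T (a.1.1 : Module.End k V) b.2 +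
        LinearMap.lTensor V (a.1.2 : Module.End k T) b.2 -
        LinearMap.rTensor T (b.1.1 : Module.End k V) a.2 -
        LinearMap.lTensor V (b.1.2 : Module.End k T) a.2 := rfl

theorem sympTripleBracket_self : sympTripleBracket hB hsts a a = 0 := by
  ext1
  · ext1 <;> apply Subtype.ext
    · simp [sympTripleBracket_sp, spComponent_self hsts]
    · simp [sympTripleBracket_inder, inderComponent_self hB hsts]
  · rw [sympTripleBracket_tensor, Prod.snd_zero]
    abel

theorem sympTripleBracket_jacobi (hV : Module.finrank k V = 2) :
    sympTripleBracket hB hsts a (sympTripleBracket hB hsts b c) =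
      sympTripleBracket hB hsts (sympTripleBracket hB hsts a b) c +
        sympTripleBracket hB hsts b (sympTripleBracket hB hsts a c) := by
  obtain ⟨⟨⟨s, hs⟩, ⟨d, hd⟩⟩, X⟩ := a
  obtain ⟨⟨⟨s', hs'⟩, ⟨d', hd'⟩⟩, Y⟩ := b
  obtain ⟨⟨⟨s'', hs''⟩, ⟨d'', hd''⟩⟩, Z⟩ := c
  ext1
  · ext1 <;> apply Subtype.ext
    · simp only [sympTripleBracket_sp, sympTripleBracket_tensor, Prod.fst_add, Submodule.coe_add,
        map_add, map_sub, LinearMap.add_apply, LinearMap.sub_apply, mul_add, add_mul, mul_sub,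
        sub_mul, ← mul_assoc]
      linear_combination (norm := module)
        commutator_spComponent (B := B) hs Y Z - commutator_spComponent (B := B) hs' X Z
          + commutator_spComponent (B := B) hs'' X Y
          - spComponent_lTensor (Bv := Bv) hsts hd Y Z
          + spComponent_lTensor (Bv := Bv) hsts hd' X Z
          - spComponent_lTensor (Bv := Bv) hsts hd'' X Y
          + spComponent_swap (Bv := Bv) hsts Y (LinearMap.rTensor T s'' X)
          + spComponent_swap (Bv := Bv) hsts Y (LinearMap.lTensor V d'' X)
    · simp only [sympTripleBracket_inder, sympTripleBracket_tensor, Prod.fst_add, Prod.snd_add,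
        Submodule.coe_add, map_add, map_sub, LinearMap.add_apply, LinearMap.sub_apply, mul_add,
        add_mul, mul_sub, sub_mul, ← mul_assoc]
      linear_combination (norm := module)
        commutator_inderComponent (Bv := Bv) hsts hd Y Z
          - commutator_inderComponent (Bv := Bv) hsts hd' X Z
          + commutator_inderComponent (Bv := Bv) hsts hd'' X Y
          - inderComponent_rTensor (tp := tp) hs Y Z
          + inderComponent_rTensor (tp := tp) hs' X Z
          - inderComponent_rTensor (tp := tp) hs'' X Y
          + inderComponent_swap hB hsts Y (LinearMap.rTensor T s'' X)
          + inderComponent_swap hB hsts Y (LinearMap.lTensor V d'' X)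
  · have hcomm (f : Module.End k V) (g : Module.End k T) (W : V ⊗[k] T) :
        g.lTensor V (f.rTensor T W) = f.rTensor T (g.lTensor V W) := by
      rw [← LinearMap.comp_apply, ← LinearMap.comp_apply, LinearMap.lTensor_comp_rTensor,
        LinearMap.rTensor_comp_lTensor]
    have hcyc := tensor_cyclic_sum hB hV hsts X Y Z
    rw [spComponent_swap hsts Z X, inderComponent_swap hB hsts Z X] at hcyc
    simp only [LinearMap.rTensor_neg, LinearMap.lTensor_neg, LinearMap.neg_apply] at hcyc
    simp only [sympTripleBracket_sp, sympTripleBracket_inder, sympTripleBracket_tensor,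
      Prod.snd_add, map_add, map_sub, LinearMap.add_apply, LinearMap.sub_apply,
      LinearMap.rTensor_add, LinearMap.rTensor_sub, LinearMap.lTensor_add, LinearMap.lTensor_sub,
      LinearMap.rTensor_mul, LinearMap.lTensor_mul, Module.End.mul_apply, hcomm]
    linear_combination (norm := module) -hcyc

end Components

end SympTripleBracket

/-- For a symplectic triple system `T` (char k ≠ 2) and a two-dimensional
space `V` with a nonzero alternating form, the space
`g(T) = (sp(V) ⊕ inder(T)) ⊕ (V ⊗ T)`, with the bracket determined by: `sp(V) ⊕ inder(T)`
a direct sum of commuting Lie algebras of endomorphisms, acting naturally on `V ⊗ T`, and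
`[u⊗x, v⊗y] = (x|y)γ_{u,v} + ⟨u|v⟩d_{x,y}`, is a Lie algebra (i.e. there exists a bilinear
alternating bracket with these values which satisfies the Jacobi identity). -/
theorem gT_is_Lie_algebra (k V T : Type*) [Field k]
    [AddCommGroup V] [Module k V] [AddCommGroup T] [Module k T]
    [FiniteDimensional k V] [FiniteDimensional k T]
    (hchar : ringChar k ≠ 2) (hV : Module.finrank k V = 2)
    (Bv : V →ₗ[k] V →ₗ[k] k) (hValt : ∀ v : V, Bv v v = 0) (hVne : Bv ≠ 0)
    (tp : T →ₗ[k] T →ₗ[k] T →ₗ[k] T) (B : T →ₗ[k] T →ₗ[k] k)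
    (hsts : IsSympTripleSystem k tp B) :
    ∃ br : ((↥(spSub k V Bv) × ↥(inderSub k T tp)) × (V ⊗[k] T)) →ₗ[k]
        ((↥(spSub k V Bv) × ↥(inderSub k T tp)) × (V ⊗[k] T)) →ₗ[k]
        ((↥(spSub k V Bv) × ↥(inderSub k T tp)) × (V ⊗[k] T)),
      -- the bracket is alternating
      (∀ a, br a a = 0) ∧
      -- the bracket satisfies the Jacobi identity (in Leibniz form)
      (∀ a b c, br a (br b c) = br (br a b) c + br b (br a c)) ∧
      -- on sp(V), the bracket is the commutator
      (∀ s s' : ↥(spSub k V Bv),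
        ((br ((s, 0), 0) ((s', 0), 0)).1.1 : V →ₗ[k] V) =
            (s : V →ₗ[k] V) ∘ₗ (s' : V →ₗ[k] V) - (s' : V →ₗ[k] V) ∘ₗ (s : V →ₗ[k] V) ∧
          (br ((s, 0), 0) ((s', 0), 0)).1.2 = 0 ∧
          (br ((s, 0), 0) ((s', 0), 0)).2 = 0) ∧
      -- on inder(T), the bracket is the commutator
      (∀ d d' : ↥(inderSub k T tp),
        (br ((0, d), 0) ((0, d'), 0)).1.1 = 0 ∧
          ((br ((0, d), 0) ((0, d'), 0)).1.2 : T →ₗ[k] T) =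
            (d : T →ₗ[k] T) ∘ₗ (d' : T →ₗ[k] T) - (d' : T →ₗ[k] T) ∘ₗ (d : T →ₗ[k] T) ∧
          (br ((0, d), 0) ((0, d'), 0)).2 = 0) ∧
      -- sp(V) and inder(T) commute
      (∀ (s : ↥(spSub k V Bv)) (d : ↥(inderSub k T tp)),
        br ((s, 0), 0) ((0, d), 0) = 0) ∧
      -- sp(V) acts on the first slot of V ⊗ T
      (∀ (s : ↥(spSub k V Bv)) (v : V) (x : T),
        br ((s, 0), 0) ((0, 0), v ⊗ₜ[k] x) = ((0, 0), ((s : V →ₗ[k] V) v) ⊗ₜ[k] x)) ∧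
      -- inder(T) acts on the second slot of V ⊗ T
      (∀ (d : ↥(inderSub k T tp)) (v : V) (x : T),
        br ((0, d), 0) ((0, 0), v ⊗ₜ[k] x) = ((0, 0), v ⊗ₜ[k] ((d : T →ₗ[k] T) x))) ∧
      -- [u⊗x, v⊗y] = (x|y)γ_{u,v} + ⟨u|v⟩d_{x,y}
      (∀ (u v : V) (x y : T),
        ((br ((0, 0), u ⊗ₜ[k] x) ((0, 0), v ⊗ₜ[k] y)).1.1 : V →ₗ[k] V) =
            B x y • gammaMap k V Bv u v ∧
          ((br ((0, 0), u ⊗ₜ[k] x) ((0, 0), v ⊗ₜ[k] y)).1.2 : T →ₗ[k] T) =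
            Bv u v • tp x y ∧
          (br ((0, 0), u ⊗ₜ[k] x) ((0, 0), v ⊗ₜ[k] y)).2 = 0) := by
  refine ⟨sympTripleBracket hValt hsts, sympTripleBracket_self hValt hsts,
    fun a b c => sympTripleBracket_jacobi hValt hsts a b c hV, fun s s' => ⟨?_, ?_, ?_⟩,
    fun d d' => ⟨?_, ?_, ?_⟩, fun s d => ?_, fun s v x => ?_, fun d v x => ?_,
    fun u v x y => ⟨?_, ?_, ?_⟩⟩
  · simp [sympTripleBracket_sp, Module.End.mul_eq_comp]
  · apply Subtype.ext
    simp [sympTripleBracket_inder]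
  · simp [sympTripleBracket_tensor]
  · apply Subtype.ext
    simp [sympTripleBracket_sp]
  · simp [sympTripleBracket_inder, Module.End.mul_eq_comp]
  · simp [sympTripleBracket_tensor]
  · ext1
    · ext1 <;> apply Subtype.ext <;> simp [sympTripleBracket_sp, sympTripleBracket_inder]
    · simp [sympTripleBracket_tensor]
  · ext1
    · ext1 <;> apply Subtype.ext <;> simp [sympTripleBracket_sp, sympTripleBracket_inder]
    · simp [sympTripleBracket_tensor]
  · ext1
    · ext1 <;> apply Subtype.ext <;> simp [sympTripleBracket_sp, sympTripleBracket_inder]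
    · simp [sympTripleBracket_tensor]
  · simp [sympTripleBracket_sp]
  · simp [sympTripleBracket_inder]
  · simp [sympTripleBracket_tensor]
end

section
/- Let (·|·) be an alternating bilinear form (possibly degenerate or zero) on a finite-dimensional vector space T over a field of characteristic ≠ 2, and let [xyz] and ⟨xyz⟩ be two triple products on T related by [xyz] = −2⟨zxy⟩ + (x|y)z for all x,y,z ∈ T. Then (T, [···], (·|·)) satisfies the four symplectic triple system identities (a)–(d) if and only if (T, ⟨···⟩, (·|·)) is a Faulkner ternary algebra. In particular, the symplectic triple systems are in bijection with the Faulkner ternary algebras with nonzero alternating bilinear form. -/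
/-- The four defining identities (a)–(d) of a symplectic triple system, for a trilinear
product `tp` and an alternating bilinear form `B` (possibly degenerate or zero). -/
def STSIdentities (k : Type*) {T : Type*} [Field k] [AddCommGroup T] [Module k T]
    (tp : T →ₗ[k] T →ₗ[k] T →ₗ[k] T) (B : T →ₗ[k] T →ₗ[k] k) : Prop :=
  (∀ x y z : T, tp x y z = tp y x z) ∧
  (∀ x y z : T, tp x y z - tp x z y = B x z • y - B x y • z + (2 * B y z) • x) ∧
  (∀ x y u v w : T, tp x y (tp u v w) =
      tp (tp x y u) v w + tp u (tp x y v) w + tp u v (tp x y w)) ∧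
  (∀ x y u v : T, B (tp x y u) v + B u (tp x y v) = 0)

/-- A Faulkner ternary algebra: an alternating bilinear form `B` and a trilinear product
`f` satisfying the three Faulkner identities. -/
def IsFaulknerTernary (k : Type*) {T : Type*} [Field k] [AddCommGroup T] [Module k T]
    (f : T →ₗ[k] T →ₗ[k] T →ₗ[k] T) (B : T →ₗ[k] T →ₗ[k] k) : Prop :=
  (∀ x y z : T, f x y z = f y x z + B x y • z) ∧
  (∀ x y z : T, f x y z = f x z y + B y z • x) ∧
  (∀ x y z v w : T, f (f x y z) v w =
      f (f x v w) y z + f x (f y v w) z + f x y (f z w v))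

section FaulknerCorrespondence

variable {k T : Type*} [Field k] [AddCommGroup T] [Module k T]
  {B : T →ₗ[k] T →ₗ[k] k} {tp f : T →ₗ[k] T →ₗ[k] T →ₗ[k] T}

theorem STSIdentities.isFaulknerTernary (h2 : (2 : k) ≠ 0) (halt : ∀ x : T, B x x = 0)
    (hrel : ∀ x y z : T, tp x y z = -((2 : k) • f z x y) + B x y • z)
    (h : STSIdentities k tp B) : IsFaulknerTernary k f B := by
  obtain ⟨ha, hb, hc, hd⟩ := h
  have hB : ∀ x y, B x y = -B y x := fun x y => (LinearMap.IsAlt.neg halt y x).symm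
  have hf : ∀ x y z, f x y z = (1 / 2 : k) • (B y z • x - tp y z x) := by
    intro x y z
    rw [hrel]
    match_scalars
    all_goals field_simp
    all_goals ring
  refine ⟨fun x y z => ?_, fun x y z => ?_, fun x y z v w => ?_⟩
  · have h1 := hb z y x
    rw [ha z y x, ha z x y, hB z x, hB z y, hB y x] at h1
    rw [hf, hf]
    linear_combination (norm := skip) (-1 / 2 : k) • h1
    match_scalars
    all_goals field_simp
    all_goals ring
  · rw [hf, hf, ha z y, hB z y]
    match_scalars
    all_goals field_simp
    all_goals ring
  · have hc' := hc v w y z x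
    have hd' := hd v w y z
    have hs : B (tp v w y) z = -B y (tp v w z) := eq_neg_of_add_eq_zero_left hd'
    simp only [hf, map_sub, map_smul, LinearMap.sub_apply, LinearMap.smul_apply, hc', hs,
      ha w v, hB w v, smul_eq_mul]
    match_scalars
    all_goals field_simp
    all_goals ring

theorem IsFaulknerTernary.stsIdentities (halt : ∀ x : T, B x x = 0)
    (hrel : ∀ x y z : T, tp x y z = -((2 : k) • f z x y) + B x y • z)
    (h : IsFaulknerTernary k f B) : STSIdentities k tp B := by
  obtain ⟨h1, h2, h3⟩ := h
  have hB : ∀ x y, B x y = -B y x := fun x y => (LinearMap.IsAlt.neg halt y x).symm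
  have ha : ∀ x y z, tp x y z = tp y x z := by
    intro x y z
    rw [hrel, hrel, h2 z x y, hB y x]
    module
  have hder : ∀ a b x y z, tp a b (f x y z) =
      f (tp a b x) y z + f x (tp a b y) z + f x y (tp a b z) := by
    intro a b x y z
    rw [ha a b z]
    simp only [hrel, map_add, map_neg, map_smul, LinearMap.add_apply, LinearMap.neg_apply,
      LinearMap.smul_apply, h3 x y z a b, hB b a]
    module
  have hd : ∀ a b x y, B (tp a b x) y + B x (tp a b y) = 0 := by
    intro a b x y
    have key : ∀ z : T, (B (tp a b x) y + B x (tp a b y)) • z = 0 := by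
      intro z
      have e1 := hder a b x y z
      rw [h1 x y z, map_add, map_smul, hder, h1 (tp a b x), h1 x (tp a b y),
        h1 x y (tp a b z)] at e1
      linear_combination (norm := module) -e1
    rcases smul_eq_zero.mp (key x) with h | h
    · exact h
    · simp [h]
  refine ⟨ha, fun x y z => ?_, fun x y u v w => ?_, hd⟩
  · rw [hrel, hrel, h2 z x y, h1 z y x, h2 y z x, hB z x, hB z y]
    module
  · have hs : B (tp x y u) v = -B u (tp x y v) := eq_neg_of_add_eq_zero_left (hd x y u v)
    rw [hrel u v w, hrel (tp x y u), hrel u (tp x y v), hrel u v (tp x y w), map_add, map_neg,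
      map_smul, map_smul, hder, hs]
    module

/-- The trilinear map `(x, y, z) ↦ t y z x`. -/
def trilinearRotate (t : T →ₗ[k] T →ₗ[k] T →ₗ[k] T) : T →ₗ[k] T →ₗ[k] T →ₗ[k] T :=
  (LinearMap.lflip.comp t).flip

theorem trilinearRotate_apply (t : T →ₗ[k] T →ₗ[k] T →ₗ[k] T) (x y z : T) :
    trilinearRotate t x y z = t y z x := rfl

/-- The trilinear map `(x, y, z) ↦ B x y • z`. -/
def formSMul (B : T →ₗ[k] T →ₗ[k] k) : T →ₗ[k] T →ₗ[k] T →ₗ[k] T :=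
  B.compr₂ (LinearMap.lsmul k T)

theorem formSMul_apply (B : T →ₗ[k] T →ₗ[k] k) (x y z : T) :
    formSMul B x y z = B x y • z := rfl

/-- The correspondence `tp x y z = -2 f z x y + B x y • z` between trilinear products. -/
def trilinearFormEquiv (h2 : (2 : k) ≠ 0) :
    (T →ₗ[k] T →ₗ[k] T →ₗ[k] T) × (T →ₗ[k] T →ₗ[k] k) ≃
      (T →ₗ[k] T →ₗ[k] T →ₗ[k] T) × (T →ₗ[k] T →ₗ[k] k) where
  toFun p := ((1 / 2 : k) • trilinearRotate (formSMul p.2 - p.1), p.2)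
  invFun p := (-((2 : k) • trilinearRotate (trilinearRotate p.1)) + formSMul p.2, p.2)
  left_inv p := by
    refine Prod.ext ?_ rfl
    ext x y z
    simp only [LinearMap.add_apply, LinearMap.neg_apply, LinearMap.smul_apply,
      LinearMap.sub_apply, trilinearRotate_apply, formSMul_apply]
    match_scalars
    all_goals field_simp
    all_goals ring
  right_inv p := by
    refine Prod.ext ?_ rfl
    ext x y z
    simp only [LinearMap.add_apply, LinearMap.neg_apply, LinearMap.smul_apply,
      LinearMap.sub_apply, trilinearRotate_apply, formSMul_apply]
    match_scalars
    all_goals field_simp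
    all_goals ring

theorem trilinearFormEquiv_rel (h2 : (2 : k) ≠ 0)
    (p : (T →ₗ[k] T →ₗ[k] T →ₗ[k] T) × (T →ₗ[k] T →ₗ[k] k)) (x y z : T) :
    p.1 x y z = -((2 : k) • (trilinearFormEquiv h2 p).1 z x y) + p.2 x y • z := by
  simp only [trilinearFormEquiv, Equiv.coe_fn_mk, LinearMap.smul_apply, LinearMap.sub_apply,
    trilinearRotate_apply, formSMul_apply]
  match_scalars
  all_goals field_simp
  all_goals ring

end FaulknerCorrespondence

/-- Let `B` be an alternating bilinear form on `T` (char ≠ 2) and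
`tp`, `f` triple products related by `tp x y z = -2 f z x y + B x y • z`. Then `(T, tp, B)`
satisfies the symplectic triple system identities (a)–(d) iff `(T, f, B)` is a Faulkner
ternary algebra. In particular, the symplectic triple systems on `T` (those with `B ≠ 0`)
are in bijection with the Faulkner ternary algebras on `T` with nonzero form. -/
theorem STSIdentities_iff_Faulkner (k T : Type*) [Field k] [AddCommGroup T] [Module k T]
    [FiniteDimensional k T] (hchar : ringChar k ≠ 2)
    (B : T →ₗ[k] T →ₗ[k] k) (halt : ∀ x : T, B x x = 0)
    (tp f : T →ₗ[k] T →ₗ[k] T →ₗ[k] T)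
    (hrel : ∀ x y z : T, tp x y z = -((2 : k) • f z x y) + B x y • z) :
    (STSIdentities k tp B ↔ IsFaulknerTernary k f B) ∧
    ∃ e : {p : (T →ₗ[k] T →ₗ[k] T →ₗ[k] T) × (T →ₗ[k] T →ₗ[k] k) //
            (∀ x : T, p.2 x x = 0) ∧ p.2 ≠ 0 ∧ STSIdentities k p.1 p.2} ≃
          {p : (T →ₗ[k] T →ₗ[k] T →ₗ[k] T) × (T →ₗ[k] T →ₗ[k] k) //
            (∀ x : T, p.2 x x = 0) ∧ p.2 ≠ 0 ∧ IsFaulknerTernary k p.1 p.2},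
      ∀ p, (e p).val.2 = p.val.2 ∧
        ∀ x y z : T, p.val.1 x y z = -((2 : k) • (e p).val.1 z x y) + p.val.2 x y • z := by
  have h2 : (2 : k) ≠ 0 := Ring.two_ne_zero hchar
  refine ⟨⟨STSIdentities.isFaulknerTernary h2 halt hrel,
    IsFaulknerTernary.stsIdentities halt hrel⟩, (trilinearFormEquiv h2).subtypeEquiv ?_,
    fun p => ⟨rfl, trilinearFormEquiv_rel h2 p.val⟩⟩
  intro p
  exact and_congr_right fun hp => and_congr_right fun _ =>
    ⟨STSIdentities.isFaulknerTernary h2 hp (trilinearFormEquiv_rel h2 p),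
      IsFaulknerTernary.stsIdentities hp (trilinearFormEquiv_rel h2 p)⟩
end

section
/- Let (T, [···]) be a null symplectic triple system over a field k of characteristic ≠ 2 and let V be a two-dimensional k-vector space with a nonzero alternating bilinear form ⟨·|·⟩. Then g(T) = inder(T) ⊕ (V ⊗ T), with the bracket given by: inder(T) is a subalgebra with the commutator bracket, [d, v⊗x] = v⊗d(x) for d ∈ inder(T), v ∈ V, x ∈ T, and [u⊗x, v⊗y] = ⟨u|v⟩d_{x,y} for u,v ∈ V, x,y ∈ T, is a Lie algebra. Moreover, g(T) is a simple Lie algebra if and only if T is a simple null symplectic triple system. -/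
open scoped TensorProduct

/-- A null symplectic triple system: a trilinear product which is symmetric in its
arguments and such that the maps `d_{x,y} = [xy·]` are derivations of the product. -/
def IsNullSTS (k : Type*) {T : Type*} [Field k] [AddCommGroup T] [Module k T]
    (tp : T →ₗ[k] T →ₗ[k] T →ₗ[k] T) : Prop :=
  (∀ x y z : T, tp x y z = tp y x z) ∧
  (∀ x y z : T, tp x y z = tp x z y) ∧
  (∀ x y u v w : T, tp x y (tp u v w) =
      tp (tp x y u) v w + tp u (tp x y v) w + tp u v (tp x y w))

/-- A null symplectic triple system is simple if `[TTT] ≠ 0` and it has no proper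
nonzero ideal, an ideal being a subspace `I` with `[TTI] ⊆ I`. -/
def IsSimpleNullSTS (k : Type*) {T : Type*} [Field k] [AddCommGroup T] [Module k T]
    (tp : T →ₗ[k] T →ₗ[k] T →ₗ[k] T) : Prop :=
  (∃ x y z : T, tp x y z ≠ 0) ∧
  ∀ I : Submodule k T, (∀ x y z : T, z ∈ I → tp x y z ∈ I) → I = ⊥ ∨ I = ⊤

namespace NullSTS

variable {k T : Type*} [Field k] [AddCommGroup T] [Module k T]
  {tp : T →ₗ[k] T →ₗ[k] T →ₗ[k] T}

theorem tp_mem_inderSub (x y : T) : tp x y ∈ inderSub k T tp :=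
  Submodule.subset_span ⟨x, y, rfl⟩

/-- Elements of `inder(T)` are derivations of the triple product. -/
theorem derivation_of_mem (h : IsNullSTS k tp) {D : T →ₗ[k] T} (hD : D ∈ inderSub k T tp)
    (u v w : T) : D (tp u v w) = tp (D u) v w + tp u (D v) w + tp u v (D w) := by
  induction hD using Submodule.span_induction with
  | mem f hf => obtain ⟨x, y, rfl⟩ := hf; exact h.2.2 x y u v w
  | zero => simp
  | add f g _ _ hf hg =>
    simp only [LinearMap.add_apply, map_add, hf, hg]
    abel
  | smul c f _ hf => simp only [LinearMap.smul_apply, map_smul, hf, smul_add]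

theorem comm_mem_inderSub (h : IsNullSTS k tp) {D D' : T →ₗ[k] T}
    (hD : D ∈ inderSub k T tp) (hD' : D' ∈ inderSub k T tp) :
    D ∘ₗ D' - D' ∘ₗ D ∈ inderSub k T tp := by
  induction hD' using Submodule.span_induction with
  | mem f hf =>
    obtain ⟨x, y, rfl⟩ := hf
    have : D ∘ₗ tp x y - tp x y ∘ₗ D = tp (D x) y + tp x (D y) := by
      ext z
      simp [derivation_of_mem h hD]
    rw [this]
    exact add_mem (tp_mem_inderSub _ _) (tp_mem_inderSub _ _)
  | zero => simp
  | add f g _ _ hf hg =>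
    rw [LinearMap.comp_add, LinearMap.add_comp, add_sub_add_comm]
    exact add_mem hf hg
  | smul c f _ hf =>
    rw [LinearMap.comp_smul, LinearMap.smul_comp, ← smul_sub]
    exact Submodule.smul_mem _ c hf

/-- An element of `inder(T)` maps every ideal of `T` into itself. -/
theorem apply_mem_ideal {J : Submodule k T} (hJ : ∀ x y z : T, z ∈ J → tp x y z ∈ J)
    {D : T →ₗ[k] T} (hD : D ∈ inderSub k T tp) {z : T} (hz : z ∈ J) : D z ∈ J := by
  induction hD using Submodule.span_induction with
  | mem f hf => obtain ⟨x, y, rfl⟩ := hf; exact hJ x y z hz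
  | zero => simp
  | add f g _ _ hf hg => exact J.add_mem hf hg
  | smul c f _ hf => exact J.smul_mem c hf

/-- The bracket of `g(T)` in coordinates with respect to a symplectic basis of `V`, which
identifies `V ⊗ T` with `T × T`. -/
def coordBracket (h : IsNullSTS k tp) :
    (inderSub k T tp × (T × T)) →ₗ[k] (inderSub k T tp × (T × T)) →ₗ[k]
      (inderSub k T tp × (T × T)) :=
  LinearMap.mk₂ k
    (fun a b =>
      (⟨(a.1 : T →ₗ[k] T) ∘ₗ (b.1 : T →ₗ[k] T) - (b.1 : T →ₗ[k] T) ∘ₗ (a.1 : T →ₗ[k] T)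
          + (tp a.2.1 b.2.2 - tp a.2.2 b.2.1),
        add_mem (comm_mem_inderSub h a.1.2 b.1.2)
          (sub_mem (tp_mem_inderSub _ _) (tp_mem_inderSub _ _))⟩,
        (a.1 : T →ₗ[k] T) b.2.1 - (b.1 : T →ₗ[k] T) a.2.1,
        (a.1 : T →ₗ[k] T) b.2.2 - (b.1 : T →ₗ[k] T) a.2.2))
    (fun a a' b => by
      ext <;> simp <;> abel)
    (fun c a b => by
      ext <;> simp [smul_sub])
    (fun a b b' => by
      ext <;> simp <;> abel)
    (fun c a b => by
      ext <;> simp [smul_sub])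

theorem coordBracket_fst_apply (h : IsNullSTS k tp) (a b : inderSub k T tp × (T × T)) (z : T) :
    ((coordBracket h a b).1 : T →ₗ[k] T) z =
      (a.1 : T →ₗ[k] T) ((b.1 : T →ₗ[k] T) z) - (b.1 : T →ₗ[k] T) ((a.1 : T →ₗ[k] T) z)
        + (tp a.2.1 b.2.2 z - tp a.2.2 b.2.1 z) := rfl

theorem coordBracket_snd (h : IsNullSTS k tp) (a b : inderSub k T tp × (T × T)) :
    (coordBracket h a b).2 =
      ((a.1 : T →ₗ[k] T) b.2.1 - (b.1 : T →ₗ[k] T) a.2.1,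
        (a.1 : T →ₗ[k] T) b.2.2 - (b.1 : T →ₗ[k] T) a.2.2) := rfl

theorem ext_inder_prod {a b : inderSub k T tp × (T × T)}
    (h₁ : ∀ z, (a.1 : T →ₗ[k] T) z = (b.1 : T →ₗ[k] T) z) (h₂ : a.2 = b.2) : a = b :=
  Prod.ext (Subtype.ext (LinearMap.ext h₁)) h₂

theorem coordBracket_self (h : IsNullSTS k tp) (a : inderSub k T tp × (T × T)) :
    coordBracket h a a = 0 := by
  refine ext_inder_prod (fun z => ?_) ?_
  · rw [coordBracket_fst_apply, h.1 a.2.2]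
    simp
  · simp [coordBracket_snd]

theorem coordBracket_leibniz (h : IsNullSTS k tp) (a b c : inderSub k T tp × (T × T)) :
    coordBracket h a (coordBracket h b c) =
      coordBracket h (coordBracket h a b) c + coordBracket h b (coordBracket h a c) := by
  obtain ⟨⟨A, hA⟩, a₁, a₂⟩ := a
  obtain ⟨⟨B, hB⟩, b₁, b₂⟩ := b
  obtain ⟨⟨C, hC⟩, c₁, c₂⟩ := c
  have h12 := h.1
  have h23 := h.2.1
  refine ext_inder_prod (fun z => ?_) (Prod.ext ?_ ?_)
  · simp only [coordBracket_fst_apply, coordBracket_snd, Prod.fst_add, Submodule.coe_add,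
      LinearMap.add_apply, map_sub, map_add, LinearMap.sub_apply,
      derivation_of_mem h hA, derivation_of_mem h hB, derivation_of_mem h hC]
    rw [h12 b₁ (C a₂), h12 b₂ (C a₁)]
    abel
  · simp only [coordBracket_fst_apply, coordBracket_snd, Prod.snd_add, Prod.fst_add, map_sub]
    rw [h23 b₁ c₂ a₁, h12 b₁ a₁ c₂, h23 b₂ c₁ a₁, h12 b₂ a₁ c₁, h23 a₁ b₂ c₁,
      h23 a₂ b₁ c₁, h12 a₁ c₁ b₂, h23 a₁ c₂ b₁]
    abel
  · simp only [coordBracket_fst_apply, coordBracket_snd, Prod.snd_add, map_sub]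
    rw [h23 a₁ c₂ b₂, h23 b₁ c₂ a₂, h12 b₁ a₂ c₂, h23 b₂ c₁ a₂, h12 b₂ a₂ c₁, h23 a₂ b₂ c₁]
    abel

/-- The ideal of `g(T)` attached to an ideal `J` of `T`. -/
def idealOf (tp : T →ₗ[k] T →ₗ[k] T →ₗ[k] T) (J : Submodule k T) :
    Submodule k (inderSub k T tp × (T × T)) where
  carrier := {a | (∀ z, (a.1 : T →ₗ[k] T) z ∈ J) ∧ a.2.1 ∈ J ∧ a.2.2 ∈ J}
  add_mem' ha hb :=
    ⟨fun z => J.add_mem (ha.1 z) (hb.1 z), J.add_mem ha.2.1 hb.2.1, J.add_mem ha.2.2 hb.2.2⟩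
  zero_mem' := ⟨fun _ => J.zero_mem, J.zero_mem, J.zero_mem⟩
  smul_mem' c _ ha := ⟨fun z => J.smul_mem c (ha.1 z), J.smul_mem c ha.2.1, J.smul_mem c ha.2.2⟩

theorem coordBracket_mem_idealOf (h : IsNullSTS k tp) {J : Submodule k T}
    (hJ : ∀ x y z : T, z ∈ J → tp x y z ∈ J) (a : inderSub k T tp × (T × T))
    {b : inderSub k T tp × (T × T)} (hb : b ∈ idealOf tp J) :
    coordBracket h a b ∈ idealOf tp J := by
  obtain ⟨h₀, h₁, h₂⟩ := hb
  have key (x y z : T) (hy : y ∈ J) : tp x y z ∈ J := by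
    rw [h.2.1]
    exact hJ x z y hy
  refine ⟨fun z => ?_, ?_, ?_⟩
  · rw [coordBracket_fst_apply]
    exact J.add_mem (J.sub_mem (apply_mem_ideal hJ a.1.2 (h₀ z)) (h₀ _))
      (J.sub_mem (key _ _ _ h₂) (key _ _ _ h₁))
  · exact J.sub_mem (apply_mem_ideal hJ a.1.2 h₁) (h₀ _)
  · exact J.sub_mem (apply_mem_ideal hJ a.1.2 h₂) (h₀ _)

/-- A bilinear product is simple if it is nonzero and has no proper nonzero left ideal. For an
alternating product left ideals are two-sided. -/
def IsSimpleProduct {A : Type*} [AddCommGroup A] [Module k A] (br : A →ₗ[k] A →ₗ[k] A) : Prop :=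
  (∃ a b, br a b ≠ 0) ∧ ∀ I : Submodule k A, (∀ a b, b ∈ I → br a b ∈ I) → I = ⊥ ∨ I = ⊤

theorem isSimpleNullSTS_of_isSimpleProduct (h : IsNullSTS k tp)
    (hs : IsSimpleProduct (coordBracket h)) : IsSimpleNullSTS k tp := by
  obtain ⟨⟨a, b, hab⟩, hs⟩ := hs
  refine ⟨?_, fun J hJ => ?_⟩
  · by_contra! h0
    have hz : ∀ D ∈ inderSub k T tp, D = 0 := fun D hD => by
      induction hD using Submodule.span_induction with
      | mem f hf => obtain ⟨x, y, rfl⟩ := hf; exact LinearMap.ext (h0 x y)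
      | zero => rfl
      | add f g _ _ hf hg => rw [hf, hg, add_zero]
      | smul c f _ hf => rw [hf, smul_zero]
    refine hab (ext_inder_prod (fun z => ?_) ?_)
    · rw [hz _ (coordBracket h a b).1.2]
      rfl
    · simp [coordBracket_snd, hz _ a.1.2, hz _ b.1.2]
  · rcases hs (idealOf tp J) (fun a _ hb => coordBracket_mem_idealOf h hJ a hb) with hI | hI
    · refine Or.inl ((Submodule.eq_bot_iff J).2 fun x hx => ?_)
      have : ((0, (x, 0)) : inderSub k T tp × (T × T)) ∈ idealOf tp J :=
        ⟨fun _ => J.zero_mem, hx, J.zero_mem⟩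
      rw [hI, Submodule.mem_bot] at this
      simpa using this
    · refine Or.inr (Submodule.eq_top_iff'.2 fun x => ?_)
      have : ((0, (x, 0)) : inderSub k T tp × (T × T)) ∈ idealOf tp J := hI ▸ Submodule.mem_top
      exact this.2.1

theorem span_range_eq_top (hs : IsSimpleNullSTS k tp) :
    Submodule.span k {w | ∃ x y z, w = tp x y z} = ⊤ := by
  obtain ⟨⟨x, y, z, hne⟩, hs⟩ := hs
  refine (hs (Submodule.span k _) fun x y z _ =>
    Submodule.subset_span (Set.mem_ofPred.2 ⟨x, y, z, rfl⟩)).resolve_left fun hb => hne ?_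
  have hmem : tp x y z ∈ Submodule.span k {w | ∃ x y z, w = tp x y z} :=
    Submodule.subset_span ⟨x, y, z, rfl⟩
  rwa [hb, Submodule.mem_bot] at hmem

/-- In a simple system no nonzero element is annihilated by all `d_{x,y}`. -/
theorem exists_tp_ne_zero (hs : IsSimpleNullSTS k tp) {z : T} (hz : z ≠ 0) :
    ∃ x y, tp x y z ≠ 0 := by
  obtain ⟨⟨x, y, w, hne⟩, hs⟩ := hs
  by_contra! h0
  let N : Submodule k T := ⨅ x, ⨅ y, LinearMap.ker (tp x y)
  have hN (w : T) : w ∈ N ↔ ∀ x y, tp x y w = 0 := by simp [N]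
  rcases hs N (fun x y w hw => by rw [(hN w).1 hw x y]; exact N.zero_mem) with hI | hI
  · exact hz ((Submodule.eq_bot_iff N).1 hI z ((hN z).2 h0))
  · exact hne ((hN w).1 (hI ▸ Submodule.mem_top) x y)

theorem isSimpleProduct_of_isSimpleNullSTS (h : IsNullSTS k tp)
    (hs : IsSimpleNullSTS k tp) : IsSimpleProduct (coordBracket h) := by
  have hspan := span_range_eq_top hs
  let ι₁ (x : T) : inderSub k T tp × (T × T) := (0, (x, 0))
  let ι₂ (x : T) : inderSub k T tp × (T × T) := (0, (0, x))
  let δ (x y : T) : inderSub k T tp × (T × T) := (⟨tp x y, tp_mem_inderSub x y⟩, 0)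
  have h₁₂ (x y : T) : coordBracket h (ι₁ x) (ι₂ y) = δ x y :=
    ext_inder_prod (fun z => by simp [coordBracket_fst_apply, ι₁, ι₂, δ])
      (by simp [coordBracket_snd, ι₁, ι₂, δ])
  have h₂₁ (x y : T) : coordBracket h (ι₂ x) (ι₁ y) = -δ x y :=
    ext_inder_prod (fun z => by simp [coordBracket_fst_apply, ι₁, ι₂, δ])
      (by simp [coordBracket_snd, ι₁, ι₂, δ])
  have h₁δ (x y z : T) : coordBracket h (ι₁ z) (δ x y) = -ι₁ (tp x y z) :=
    ext_inder_prod (fun z => by simp [coordBracket_fst_apply, ι₁, δ])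
      (by simp [coordBracket_snd, ι₁, δ])
  have h₂δ (x y z : T) : coordBracket h (ι₂ z) (δ x y) = -ι₂ (tp x y z) :=
    ext_inder_prod (fun z => by simp [coordBracket_fst_apply, ι₂, δ])
      (by simp [coordBracket_snd, ι₂, δ])
  have hδ₁ (x y z : T) : coordBracket h (δ x y) (ι₁ z) = ι₁ (tp x y z) :=
    ext_inder_prod (fun z => by simp [coordBracket_fst_apply, ι₁, δ])
      (by simp [coordBracket_snd, ι₁, δ])
  have hδ₂ (x y z : T) : coordBracket h (δ x y) (ι₂ z) = ι₂ (tp x y z) :=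
    ext_inder_prod (fun z => by simp [coordBracket_fst_apply, ι₂, δ])
      (by simp [coordBracket_snd, ι₂, δ])
  obtain ⟨⟨x₀, y₀, z₀, hne⟩, hs'⟩ := id hs
  refine ⟨⟨δ x₀ y₀, ι₁ z₀, fun h0 => hne ?_⟩, fun I hI => ?_⟩
  · rw [hδ₁] at h0
    simpa [ι₁] using h0
  let J₁ : Submodule k T := I.comap (LinearMap.inr k _ _ ∘ₗ LinearMap.inl k T T)
  let J₂ : Submodule k T := I.comap (LinearMap.inr k _ _ ∘ₗ LinearMap.inr k T T)
  have hJ₁ (x : T) : x ∈ J₁ ↔ ι₁ x ∈ I := Iff.rfl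
  have hJ₂ (x : T) : x ∈ J₂ ↔ ι₂ x ∈ I := Iff.rfl
  have alt₁ := hs' J₁ fun x y z hz => by
    rw [hJ₁, ← hδ₁]
    exact hI _ _ hz
  have alt₂ := hs' J₂ fun x y z hz => by
    rw [hJ₂, ← hδ₂]
    exact hI _ _ hz
  -- if `I` contains all `d_{x,y}`, it is everything
  have top_of_δ (hd : ∀ x y, δ x y ∈ I) : I = ⊤ := by
    have t₁ : J₁ = ⊤ := top_unique <| hspan ▸ Submodule.span_le.2 (by
      rintro _ ⟨x, y, z, rfl⟩
      exact (hJ₁ _).2 (neg_mem_iff.1 (h₁δ x y z ▸ hI (ι₁ z) _ (hd x y))))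
    have t₂ : J₂ = ⊤ := top_unique <| hspan ▸ Submodule.span_le.2 (by
      rintro _ ⟨x, y, z, rfl⟩
      exact (hJ₂ _).2 (neg_mem_iff.1 (h₂δ x y z ▸ hI (ι₂ z) _ (hd x y))))
    have t₀ : inderSub k T tp ≤
        (I.comap (LinearMap.inl k _ _)).map (inderSub k T tp).subtype :=
      Submodule.span_le.2 (by
        rintro _ ⟨x, y, rfl⟩
        exact ⟨_, hd x y, rfl⟩)
    refine Submodule.eq_top_iff'.2 fun ⟨D, x, y⟩ => ?_
    obtain ⟨D', hD', hDD'⟩ := t₀ D.2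
    obtain rfl : D' = D := Subtype.ext hDD'
    have e : ((D', x, y) : inderSub k T tp × (T × T)) =
        LinearMap.inl k (inderSub k T tp) (T × T) D' + (ι₁ x + ι₂ y) := by
      simp [ι₁, ι₂]
    rw [e]
    exact add_mem hD' (add_mem ((hJ₁ x).1 (t₁ ▸ Submodule.mem_top))
      ((hJ₂ y).1 (t₂ ▸ Submodule.mem_top)))
  have top_of_J₁ (t : J₁ = ⊤) : I = ⊤ := top_of_δ fun x y => by
    have := hI (ι₂ x) (ι₁ y) ((hJ₁ y).1 (t ▸ Submodule.mem_top))
    rwa [h₂₁, neg_mem_iff] at this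
  have top_of_J₂ (t : J₂ = ⊤) : I = ⊤ := top_of_δ fun x y => by
    have := hI (ι₁ x) (ι₂ y) ((hJ₂ y).1 (t ▸ Submodule.mem_top))
    rwa [h₁₂] at this
  rw [or_iff_not_imp_right]
  intro hnt
  have b₁ : J₁ = ⊥ := alt₁.resolve_right (mt top_of_J₁ hnt)
  have b₂ : J₂ = ⊥ := alt₂.resolve_right (mt top_of_J₂ hnt)
  refine (Submodule.eq_bot_iff I).2 fun a ha => ?_
  have hc₂ : a.2.2 = 0 := by
    by_contra hz
    obtain ⟨x, y, hxy⟩ := exists_tp_ne_zero hs hz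
    refine hxy ((Submodule.eq_bot_iff J₁).1 b₁ _ ((hJ₁ _).2 (neg_mem_iff.1 ?_)))
    convert hI (ι₁ y) _ (hI (ι₁ x) a ha) using 1
    refine ext_inder_prod (fun z => by simp [coordBracket_fst_apply, coordBracket_snd, ι₁]) ?_
    simp [coordBracket_fst_apply, coordBracket_snd, ι₁, h.2.1 x y]
  have hc₁ : a.2.1 = 0 := by
    by_contra hz
    obtain ⟨x, y, hxy⟩ := exists_tp_ne_zero hs hz
    refine hxy ((Submodule.eq_bot_iff J₂).1 b₂ _ ((hJ₂ _).2 ?_))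
    convert hI (ι₂ y) _ (hI (ι₂ x) a ha) using 1
    refine ext_inder_prod (fun z => by simp [coordBracket_fst_apply, coordBracket_snd, ι₂]) ?_
    simp [coordBracket_fst_apply, coordBracket_snd, ι₂, h.2.1 x y]
  refine ext_inder_prod (fun z => ?_) (Prod.ext hc₁ hc₂)
  refine (Submodule.eq_bot_iff J₁).1 b₁ _ ((hJ₁ _).2 (neg_mem_iff.1 ?_))
  convert hI (ι₁ z) a ha using 1
  refine ext_inder_prod (fun w => ?_) ?_
  · simp [coordBracket_fst_apply, ι₁, hc₂]
  · simp [coordBracket_snd, ι₁]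

theorem isSimpleProduct_congr {A B : Type*} [AddCommGroup A] [Module k A] [AddCommGroup B]
    [Module k B] (e : A ≃ₗ[k] B) {f : A →ₗ[k] A →ₗ[k] A} {g : B →ₗ[k] B →ₗ[k] B}
    (hfg : ∀ a b, e (f a b) = g (e a) (e b)) (hf : IsSimpleProduct f) : IsSimpleProduct g := by
  obtain ⟨⟨a, b, hab⟩, hf⟩ := hf
  refine ⟨⟨e a, e b, fun h0 => hab (e.injective ?_)⟩, fun I hI => ?_⟩
  · rw [hfg, h0, map_zero]
  · have hm : (I.comap e.toLinearMap).map e.toLinearMap = I :=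
      Submodule.map_comap_eq_of_surjective e.surjective I
    refine (hf (I.comap e.toLinearMap) fun a b hb => ?_).imp (fun h0 => ?_) fun h0 => ?_
    · change e (f a b) ∈ I
      rw [hfg]
      exact hI _ _ hb
    · rw [← hm, h0, Submodule.map_bot]
    · rw [← hm, h0, Submodule.map_top, LinearEquiv.range]

/-- A two-dimensional space with a nonzero alternating form is the standard symplectic plane. -/
theorem exists_symplectic_coords {V : Type*} [AddCommGroup V] [Module k V]
    (hV : Module.finrank k V = 2) (Bv : V →ₗ[k] V →ₗ[k] k) (hValt : ∀ v : V, Bv v v = 0)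
    (hVne : Bv ≠ 0) :
    ∃ φ : V ≃ₗ[k] k × k, ∀ u v, Bv u v = (φ u).1 * (φ v).2 - (φ u).2 * (φ v).1 := by
  have : FiniteDimensional k V := Module.finite_of_finrank_eq_succ hV
  let b := Module.finBasisOfFinrankEq k V hV
  have hneg : Bv (b 1) (b 0) = -Bv (b 0) (b 1) := by
    have := hValt (b 0 + b 1)
    simp only [map_add, LinearMap.add_apply, hValt, zero_add, add_zero] at this
    exact eq_neg_of_add_eq_zero_left this
  have hB (u v : V) : Bv u v =
      Bv (b 0) (b 1) * (b.repr u 0 * b.repr v 1 - b.repr u 1 * b.repr v 0) := by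
    conv_lhs => rw [← b.sum_repr u, ← b.sum_repr v]
    simp only [Fin.sum_univ_two, map_add, LinearMap.add_apply, map_smul, LinearMap.smul_apply,
      hValt, hneg, smul_eq_mul]
    ring
  have hc : Bv (b 0) (b 1) ≠ 0 := fun hc => hVne (LinearMap.ext₂ fun u v => by simp [hB u v, hc])
  refine ⟨b.equivFun ≪≫ₗ LinearEquiv.finTwoArrow k k ≪≫ₗ
    (LinearEquiv.smulOfNeZero k k _ hc).prodCongr (LinearEquiv.refl k k), fun u v => ?_⟩
  rw [hB]
  simp [LinearEquiv.smulOfNeZero, LinearEquiv.smulOfUnit, Units.smul_def]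
  ring

end NullSTS

open NullSTS

/-- For a null symplectic triple system `T` over a field of
characteristic `≠ 2` and a two-dimensional space `V` with a nonzero alternating form
`⟨·|·⟩`, the space `g(T) = inder(T) ⊕ (V ⊗ T)`, with the bracket which is the commutator
on `inder(T)`, the natural action `[d, v⊗x] = v ⊗ d(x)`, and
`[u⊗x, v⊗y] = ⟨u|v⟩ d_{x,y}`, is a Lie algebra; moreover it is simple if and only if `T`
is a simple null symplectic triple system. -/
theorem nullSTS_gT_Lie_and_simple (k V T : Type*) [Field k]
    [AddCommGroup V] [Module k V] [AddCommGroup T] [Module k T]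
    [FiniteDimensional k V] [FiniteDimensional k T]
    (hchar : ringChar k ≠ 2) (hV : Module.finrank k V = 2)
    (Bv : V →ₗ[k] V →ₗ[k] k) (hValt : ∀ v : V, Bv v v = 0) (hVne : Bv ≠ 0)
    (tp : T →ₗ[k] T →ₗ[k] T →ₗ[k] T) (hnsts : IsNullSTS k tp) :
    ∃ br : (↥(inderSub k T tp) × (V ⊗[k] T)) →ₗ[k]
        (↥(inderSub k T tp) × (V ⊗[k] T)) →ₗ[k] (↥(inderSub k T tp) × (V ⊗[k] T)),
      -- the bracket is alternating
      (∀ a, br a a = 0) ∧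
      -- the bracket satisfies the Jacobi identity (in Leibniz form)
      (∀ a b c, br a (br b c) = br (br a b) c + br b (br a c)) ∧
      -- on inder(T) the bracket is the commutator
      (∀ d d' : ↥(inderSub k T tp),
        ((br (d, 0) (d', 0)).1 : T →ₗ[k] T) =
            (d : T →ₗ[k] T) ∘ₗ (d' : T →ₗ[k] T) - (d' : T →ₗ[k] T) ∘ₗ (d : T →ₗ[k] T) ∧
          (br (d, 0) (d', 0)).2 = 0) ∧
      -- inder(T) acts on the second slot of V ⊗ T
      (∀ (d : ↥(inderSub k T tp)) (v : V) (x : T),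
        br (d, 0) (0, v ⊗ₜ[k] x) = (0, v ⊗ₜ[k] ((d : T →ₗ[k] T) x))) ∧
      -- [u⊗x, v⊗y] = ⟨u|v⟩ d_{x,y}
      (∀ (u v : V) (x y : T),
        ((br (0, u ⊗ₜ[k] x) (0, v ⊗ₜ[k] y)).1 : T →ₗ[k] T) = Bv u v • tp x y ∧
          (br (0, u ⊗ₜ[k] x) (0, v ⊗ₜ[k] y)).2 = 0) ∧
      -- g(T) is simple iff T is simple
      (((∃ a b, br a b ≠ 0) ∧
          ∀ I : Submodule k (↥(inderSub k T tp) × (V ⊗[k] T)),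
            (∀ a b, b ∈ I → br a b ∈ I) → I = ⊥ ∨ I = ⊤) ↔
        IsSimpleNullSTS k tp) := by
  obtain ⟨φ, hφ⟩ := exists_symplectic_coords hV Bv hValt hVne
  let ψ : V ⊗[k] T ≃ₗ[k] T × T := TensorProduct.congr φ (LinearEquiv.refl k T) ≪≫ₗ
    TensorProduct.prodLeft k k k k T ≪≫ₗ
      (TensorProduct.lid k T).prodCongr (TensorProduct.lid k T)
  have hψ (u : V) (x : T) : ψ (u ⊗ₜ[k] x) = ((φ u).1 • x, (φ u).2 • x) := by
    rcases hu : φ u with ⟨s, t⟩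
    simp [ψ, hu]
  let e := (LinearEquiv.refl k (inderSub k T tp)).prodCongr ψ
  have he (D : inderSub k T tp) (m : V ⊗[k] T) : e (D, m) = (D, ψ m) := rfl
  let br := ((coordBracket hnsts).compl₁₂ e.toLinearMap e.toLinearMap).compr₂ e.symm.toLinearMap
  have hbr (a b) : e (br a b) = coordBracket hnsts (e a) (e b) := by simp [br]
  have hfst (a b) : (br a b).1 = (coordBracket hnsts (e a) (e b)).1 :=
    congrArg Prod.fst (hbr a b)
  have hsnd (a b) : ψ (br a b).2 = (coordBracket hnsts (e a) (e b)).2 :=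
    congrArg Prod.snd (hbr a b)
  refine ⟨br, fun a => e.injective ?_, fun a b c => e.injective ?_, fun d d' => ⟨?_, ?_⟩,
    fun d v x => e.injective ?_, fun u v x y => ⟨?_, ?_⟩, fun hs => ?_, fun hs => ?_⟩
  · rw [hbr, coordBracket_self, map_zero]
  · simp only [map_add, hbr, coordBracket_leibniz hnsts (e a)]
  · ext z
    simp [hfst, he, coordBracket_fst_apply]
  · apply ψ.injective
    simp [hsnd, he, coordBracket_snd]
  · rw [hbr]
    refine ext_inder_prod (fun z => ?_) ?_
    · simp [he, coordBracket_fst_apply]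
    · simp [he, coordBracket_snd, hψ]
  · ext z
    simp only [hfst, he, coordBracket_fst_apply, hψ, hφ]
    simp [smul_smul, sub_smul, mul_comm]
  · apply ψ.injective
    simp [hsnd, he, coordBracket_snd]
  · exact isSimpleNullSTS_of_isSimpleProduct hnsts (isSimpleProduct_congr e hbr hs)
  · refine isSimpleProduct_congr e.symm (fun a b => ?_)
      (isSimpleProduct_of_isSimpleNullSTS hnsts hs)
    simp [br]
end
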